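/- Let (X,d,μ) be a space of homogeneous type, let D be a dyadic grid on X, let p(·) be an exponent function with p(·) ∈ LH, and let w ∈ A_{p(·)}. Then there exists a constant K such that for every dyadic cube Q ∈ D, ‖w χ_Q‖_{p(·)} ‖w^{-1} χ_Q‖_{p'(·)} ≤ K μ(Q). -/

import Mathlib

open MeasureTheory ENNReal NNReal Filter

namespace SHT

variable {X : Type*} [MeasurableSpace X]

/-- The quasi-metric ball `B(x,r) = {y | d x y < r}`. -/
def ball (d : X → X → ℝ) (x : X) (r : ℝ) : Set X := {y | d x y < r}

/-- `(X, d, μ)` is a space of homogeneous type with quasi-metric constant `A₀`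
and doubling constant `Cμ`. -/
structure IsSHT (d : X → X → ℝ) (μ : Measure X) (A₀ Cμ : ℝ) : Prop where
  d_nonneg : ∀ x y, 0 ≤ d x y
  d_eq_zero_iff : ∀ x y, d x y = 0 ↔ x = y
  d_symm : ∀ x y, d x y = d y x
  one_le_A₀ : 1 ≤ A₀
  d_triangle : ∀ x y z, d x y ≤ A₀ * (d x z + d z y)
  one_le_Cμ : 1 ≤ Cμ
  measurableSet_ball : ∀ x r, MeasurableSet (ball d x r)
  ball_pos : ∀ x r, 0 < r → 0 < μ (ball d x r)
  ball_ne_top : ∀ x r, 0 < r → μ (ball d x r) ≠ ⊤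
  doubling : ∀ x r, 0 < r → μ (ball d x (2 * r)) ≤ ENNReal.ofReal Cμ * μ (ball d x r)

/-- The modular `ρ_{p(·)}(f) = ∫_{X ∖ X_∞} f(x)^{p(x)} dμ + ‖f‖_{L^∞(X_∞)}`
for an (extended-real valued) exponent `p` and a nonnegative function `f`. -/
noncomputable def modular (μ : Measure X) (p : X → ℝ≥0∞) (f : X → ℝ≥0∞) : ℝ≥0∞ :=
  (∫⁻ x in {x | p x ≠ ⊤}, f x ^ (p x).toReal ∂μ) + essSup f (μ.restrict {x | p x = ⊤})

/-- The Luxemburg norm `‖f‖_{p(·)} = inf {λ > 0 | ρ_{p(·)}(f/λ) ≤ 1}`. -/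
noncomputable def luxNorm (μ : Measure X) (p : X → ℝ≥0∞) (f : X → ℝ≥0∞) : ℝ≥0∞ :=
  sInf {lam : ℝ≥0∞ | 0 < lam ∧ modular μ p (fun x => f x / lam) ≤ 1}

/-- The pointwise conjugate exponent `p'(x) = p(x)/(p(x)-1)`, with the conventions
`p'(x) = ∞` if `p(x) = 1` and `p'(x) = 1` if `p(x) = ∞`. -/
noncomputable def conjExp (p : X → ℝ≥0∞) : X → ℝ≥0∞ := fun x =>
  if p x = ⊤ then 1 else p x / (p x - 1)

/-- A real-valued exponent function viewed as an extended-real valued one. -/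
noncomputable def ofRealExp (p : X → ℝ) : X → ℝ≥0∞ := fun x => ENNReal.ofReal (p x)

/-- Local log-Hölder continuity of an exponent function. -/
def LH0 (d : X → X → ℝ) (p : X → ℝ) : Prop :=
  ∃ C₀ : ℝ, 0 < C₀ ∧ ∀ x y, 0 < d x y → d x y < 1 / 2 →
    |p x - p y| ≤ C₀ / (-Real.log (d x y))

/-- Log-Hölder continuity at infinity, with respect to the base point `x₀`
and with limit value `pinf`. -/
def LHinf (d : X → X → ℝ) (x₀ : X) (p : X → ℝ) (pinf : ℝ) : Prop :=
  ∃ Cinf : ℝ, 0 < Cinf ∧ ∀ x, |p x - pinf| ≤ Cinf / Real.log (Real.exp 1 + d x x₀)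

/-- Global log-Hölder continuity. -/
def LH (d : X → X → ℝ) (x₀ : X) (p : X → ℝ) : Prop :=
  LH0 d p ∧ ∃ pinf : ℝ, LHinf d x₀ p pinf

/-- `w` is a weight: measurable, positive and finite a.e., and locally integrable. -/
def IsWeight (d : X → X → ℝ) (μ : Measure X) (w : X → ℝ≥0∞) : Prop :=
  Measurable w ∧ (∀ᵐ x ∂μ, 0 < w x ∧ w x < ⊤) ∧
    ∀ (x : X) (r : ℝ), 0 < r → (∫⁻ y in ball d x r, w y ∂μ) ≠ ⊤

/-- The variable Muckenhoupt condition `w ∈ A_{p(·)}`: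
`‖w χ_B‖_{p(·)} ‖w⁻¹ χ_B‖_{p'(·)} ≤ K μ(B)` for all quasi-metric balls `B`. -/
def Apvar (d : X → X → ℝ) (μ : Measure X) (p : X → ℝ≥0∞) (w : X → ℝ≥0∞) : Prop :=
  ∃ K : ℝ≥0, ∀ (x : X) (r : ℝ), 0 < r →
    luxNorm μ p ((ball d x r).indicator w) *
      luxNorm μ (conjExp p) ((ball d x r).indicator fun y => (w y)⁻¹) ≤ K * μ (ball d x r)

/-- The uncentered Hardy–Littlewood maximal operator over quasi-metric balls. -/
noncomputable def maximal (d : X → X → ℝ) (μ : Measure X) (f : X → ℝ≥0∞) (x : X) : ℝ≥0∞ :=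
  ⨆ (z : X) (r : ℝ) (_ : 0 < r ∧ x ∈ ball d z r),
    (μ (ball d z r))⁻¹ * ∫⁻ y in ball d z r, f y ∂μ

/-- `f ∈ L^{p(·)}`: the modular of `f/λ` is finite for some `λ > 0`. -/
def MemLpvar (μ : Measure X) (p : X → ℝ≥0∞) (f : X → ℝ≥0∞) : Prop :=
  ∃ lam : ℝ≥0∞, 0 < lam ∧ modular μ p (fun x => f x / lam) < ⊤


/-- `D` is a dyadic grid on `X`, with generation-`k` cubes `D k`, center points
`center Q`, and constants `Cd > 0`, `d₀ > 1`, `0 < ε < 1`. -/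
structure IsDyadicGrid (d : X → X → ℝ) (μ : Measure X) (D : ℤ → Set (Set X))
    (center : Set X → X) (Cd d₀ ε : ℝ) : Prop where
  Cd_pos : 0 < Cd
  one_lt_d₀ : 1 < d₀
  ε_pos : 0 < ε
  ε_lt_one : ε < 1
  countable : ∀ k : ℤ, (D k).Countable
  measurableSet : ∀ k : ℤ, ∀ Q ∈ D k, MeasurableSet Q
  pairwiseDisjoint : ∀ k : ℤ, (D k).Pairwise Disjoint
  cover : ∀ k : ℤ, ⋃₀ D k = Set.univ
  nested : ∀ k l : ℤ, ∀ Q ∈ D k, ∀ Q' ∈ D l, (Q ∩ Q').Nonempty → Q ⊆ Q' ∨ Q' ⊆ Q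
  exists_child : ∀ k : ℤ, ∀ Q ∈ D k, ∃ Q' ∈ D (k - 1), Q' ⊆ Q
  existsUnique_parent : ∀ k : ℤ, ∀ Q ∈ D k, ∃! Q', Q' ∈ D (k + 1) ∧ Q ⊆ Q'
  child_lower_bound : ∀ k : ℤ, ∀ Q ∈ D k, ∀ Q' ∈ D (k - 1), Q' ⊆ Q →
    ENNReal.ofReal ε * μ Q ≤ μ Q'
  ball_subset_subset_ball : ∀ k : ℤ, ∀ Q ∈ D k,
    ball d (center Q) (d₀ ^ k) ⊆ Q ∧ Q ⊆ ball d (center Q) (Cd * d₀ ^ k)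

/-- The weighted dyadic maximal operator `M^D_σ`. -/
noncomputable def dyadicMaximal (μ : Measure X) (D : ℤ → Set (Set X)) (σ : X → ℝ≥0∞)
    (f : X → ℝ≥0∞) (x : X) : ℝ≥0∞ :=
  ⨆ (Q : Set X) (_ : (∃ k : ℤ, Q ∈ D k) ∧ x ∈ Q),
    (∫⁻ y in Q, σ y ∂μ)⁻¹ * ∫⁻ y in Q, f y * σ y ∂μ

/-! A dyadic cube lies between two concentric balls whose radii have a ratio independent of the
cube, so by doubling its measure is comparable to that of the larger ball. Since the product of
norms in the `A_{p(·)}` condition is monotone in the set, the bound on the larger ball passes to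
the cube. -/

section Luxemburg

variable {μ : Measure X} {p f g : X → ℝ≥0∞}

lemma modular_mono_ae (h : f ≤ᵐ[μ] g) : modular μ p f ≤ modular μ p g := by
  refine add_le_add (lintegral_mono_ae ?_) (essSup_mono_ae (ae_restrict_of_ae h))
  filter_upwards [ae_restrict_of_ae h] with x hx
  exact ENNReal.rpow_le_rpow hx ENNReal.toReal_nonneg

lemma luxNorm_mono_ae (h : f ≤ᵐ[μ] g) : luxNorm μ p f ≤ luxNorm μ p g := by
  refine sInf_le_sInf fun lam ⟨hlam, hg⟩ => ⟨hlam, (modular_mono_ae ?_).trans hg⟩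
  filter_upwards [h] with x hx
  exact ENNReal.div_le_div_right hx lam

lemma monotone_luxNorm_indicator : Monotone fun E : Set X => luxNorm μ p (E.indicator f) :=
  fun _ _ hEF => luxNorm_mono_ae <| Eventually.of_forall <|
    Set.indicator_le_indicator_of_subset hEF fun _ => zero_le

end Luxemburg

lemma monotone_ball {X : Type*} {d : X → X → ℝ} {x : X} : Monotone (ball d x) :=
  fun _ _ hrs _ hy => lt_of_lt_of_le hy hrs

section Doubling

variable {d : X → X → ℝ} {μ : Measure X}

lemma measure_ball_two_pow_mul_le {c : ℝ≥0∞}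
    (hμ : ∀ x r, 0 < r → μ (ball d x (2 * r)) ≤ c * μ (ball d x r))
    (x : X) {r : ℝ} (hr : 0 < r) (n : ℕ) :
    μ (ball d x (2 ^ n * r)) ≤ c ^ n * μ (ball d x r) := by
  induction n with
  | zero => simp
  | succ n ih =>
    calc μ (ball d x (2 ^ (n + 1) * r))
        = μ (ball d x (2 * (2 ^ n * r))) := by rw [pow_succ', mul_assoc]
      _ ≤ c * μ (ball d x (2 ^ n * r)) := hμ x _ (by positivity)
      _ ≤ c * (c ^ n * μ (ball d x r)) := by gcongr
      _ = c ^ (n + 1) * μ (ball d x r) := by rw [pow_succ', mul_assoc]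

lemma exists_le_mul_measure_of_ball_subset_subset_ball {c K : ℝ≥0}
    (hμ : ∀ x r, 0 < r → μ (ball d x (2 * r)) ≤ c * μ (ball d x r))
    {Φ : Set X → ℝ≥0∞} (hΦ : Monotone Φ)
    (hK : ∀ x r, 0 < r → Φ (ball d x r) ≤ K * μ (ball d x r)) (C : ℝ) :
    ∃ K' : ℝ≥0, ∀ x r, 0 < r → ∀ E, ball d x r ⊆ E → E ⊆ ball d x (C * r) →
      Φ E ≤ K' * μ E := by
  obtain ⟨n, hn⟩ := pow_unbounded_of_one_lt C (one_lt_two : (1 : ℝ) < 2)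
  refine ⟨K * c ^ n, fun x r hr E hrE hEC => ?_⟩
  have hE : E ⊆ ball d x (2 ^ n * r) := hEC.trans (monotone_ball (by gcongr))
  calc Φ E ≤ Φ (ball d x (2 ^ n * r)) := hΦ hE
    _ ≤ K * μ (ball d x (2 ^ n * r)) := hK x _ (by positivity)
    _ ≤ K * (c ^ n * μ (ball d x r)) := by
      gcongr
      exact measure_ball_two_pow_mul_le hμ x hr n
    _ ≤ K * (c ^ n * μ E) := by gcongr
    _ = ↑(K * c ^ n) * μ E := by push_cast; rw [mul_assoc]

end Doubling

theorem Apvar_dyadic_cubes_general {d : X → X → ℝ} {μ : Measure X} {c : ℝ≥0}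
    (hμ : ∀ x r, 0 < r → μ (ball d x (2 * r)) ≤ c * μ (ball d x r))
    {p w : X → ℝ≥0∞} (hap : Apvar d μ p w) (C : ℝ) :
    ∃ K : ℝ≥0, ∀ x r, 0 < r → ∀ E, ball d x r ⊆ E → E ⊆ ball d x (C * r) →
      luxNorm μ p (E.indicator w) * luxNorm μ (conjExp p) (E.indicator fun y => (w y)⁻¹) ≤
        K * μ E := by
  obtain ⟨K, hK⟩ := hap
  exact exists_le_mul_measure_of_ball_subset_subset_ball hμ
    (monotone_luxNorm_indicator.mul' monotone_luxNorm_indicator) hK C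

theorem Apvar_dyadic_cubes
    {X : Type*} [MeasurableSpace X] (d : X → X → ℝ) (μ : Measure X) (A₀ Cμ : ℝ)
    (hX : IsSHT d μ A₀ Cμ)
    (D : ℤ → Set (Set X)) (center : Set X → X) (Cd d₀ ε : ℝ)
    (hD : IsDyadicGrid d μ D center Cd d₀ ε) (x₀ : X)
    (p : X → ℝ) (hpmeas : Measurable p) (hp1 : ∀ x, 1 ≤ p x)
    (hLH : LH d x₀ p)
    (w : X → ℝ≥0∞) (hw : IsWeight d μ w) (hap : Apvar d μ (ofRealExp p) w) :
    ∃ K : ℝ≥0, ∀ k : ℤ, ∀ Q ∈ D k,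
      luxNorm μ (ofRealExp p) (Q.indicator w) *
        luxNorm μ (conjExp (ofRealExp p)) (Q.indicator fun y => (w y)⁻¹) ≤ K * μ Q := by
  obtain ⟨K, hK⟩ := Apvar_dyadic_cubes_general hX.doubling hap Cd
  refine ⟨K, fun k Q hQ => ?_⟩
  obtain ⟨hball, hQball⟩ := hD.ball_subset_subset_ball k Q hQ
  exact hK (center Q) (d₀ ^ k) (zpow_pos (one_pos.trans hD.one_lt_d₀) k) Q hball hQball

end SHT
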